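/- Let (X_{n,θ})_{n∈ℕ, θ∈Θ} and (X_θ)_{θ∈Θ} be random variables on (Ω, F) with values in a separable Hilbert space H. Assume: (i) for every h ∈ H, the real-valued family (⟨X_{n,θ}, h⟩) converges uniformly in distribution over Θ to (⟨X_θ, h⟩); (ii) (X_{n,θ})_{n∈ℕ, θ∈Θ} is sequentially tight; and (iii) (X_θ)_{θ∈Θ} is uniformly tight. Then (X_{n,θ}) converges uniformly in distribution over Θ to (X_θ). -/

import Mathlib

open MeasureTheory ProbabilityTheory Filter
open scoped ENNReal NNReal RealInnerProductSpace

noncomputable section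

/-- Bounded-Lipschitz distance between the laws of `U` and `V` under `μ`, i.e. the supremum of
`|E f(U) - E f(V)|` over functions `f` with values in `[-1, 1]` that are `1`-Lipschitz. -/
def dBL {Ω B : Type*} [MeasurableSpace Ω] [PseudoMetricSpace B]
    (μ : Measure Ω) (U V : Ω → B) : ℝ :=
  ⨆ f : {g : B → ℝ // LipschitzWith 1 g ∧ ∀ x, |g x| ≤ 1},
    |(∫ ω, f.1 (U ω) ∂μ) - ∫ ω, f.1 (V ω) ∂μ|

/-- `(X_{n,θ})` converges uniformly in distribution over `Θ` to `(Xlim_θ)`. -/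
def TendstoUnifInDist {Ω Θ B : Type*} [MeasurableSpace Ω] [PseudoMetricSpace B]
    (P : Θ → Measure Ω) (X : ℕ → Θ → Ω → B) (Xlim : Θ → Ω → B) : Prop :=
  Filter.Tendsto (fun n => ⨆ θ, dBL (P θ) (X n θ) (Xlim θ)) Filter.atTop (nhds 0)

/-- The family `(X_θ)` is uniformly tight over `Θ`. -/
def UniformlyTight {Ω Θ B : Type*} [MeasurableSpace Ω] [TopologicalSpace B]
    (P : Θ → Measure Ω) (X : Θ → Ω → B) : Prop :=
  ∀ ε : ℝ, 0 < ε → ∃ K : Set B, IsCompact K ∧ (⨆ θ, P θ {ω | X θ ω ∉ K}) < ENNReal.ofReal ε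

/-- The family `(X_{n,θ})` is sequentially tight: for every sequence `(θ_n)` in `Θ`, the
sequence of laws of `X_{n, θ_n}` under `P (θ_n)` is tight. -/
def SeqTight {Ω Θ B : Type*} [MeasurableSpace Ω] [TopologicalSpace B]
    (P : Θ → Measure Ω) (X : ℕ → Θ → Ω → B) : Prop :=
  ∀ θs : ℕ → Θ, ∀ ε : ℝ, 0 < ε → ∃ K : Set B, IsCompact K ∧
    ∀ n, P (θs n) {ω | X n (θs n) ω ∉ K} < ENNReal.ofReal ε

open Topology BoundedContinuousFunction in
/-- Tight sequences of laws converge along ultrafilters. -/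
lemma aux_exists_lim {H : Type*} [NormedAddCommGroup H] [MeasurableSpace H] [BorelSpace H]
    (μ : ℕ → ProbabilityMeasure H)
    (hμ : ∀ ε : ℝ, 0 < ε → ∃ K : Set H, IsCompact K ∧ ∀ n, (μ n : Measure H) Kᶜ ≤ ENNReal.ofReal ε)
    (U : Ultrafilter ℕ) : ∃ m : ProbabilityMeasure H, Tendsto μ U (𝓝 m) := by
  have ht : IsTightMeasureSet
      {((m : ProbabilityMeasure H) : Measure H) | m ∈ Set.range μ} := by
    rw [isTightMeasureSet_iff_exists_isCompact_measure_compl_le]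
    intro ε hε
    by_cases htop : ε = ⊤
    · exact ⟨∅, isCompact_empty, by simp [htop]⟩
    obtain ⟨K, hK, h⟩ := hμ ε.toReal (ENNReal.toReal_pos hε.ne' htop)
    refine ⟨K, hK, ?_⟩
    rintro _ ⟨_, ⟨n, rfl⟩, rfl⟩
    simpa [ENNReal.ofReal_toReal htop] using h n
  have hc := isCompact_closure_of_isTightMeasureSet ht
  obtain ⟨m, -, hm⟩ := hc.ultrafilter_le_nhds (U.map μ) (by
    simp only [Filter.le_principal_iff, Ultrafilter.mem_coe, Ultrafilter.mem_map]
    exact Filter.univ_mem' fun n => subset_closure ⟨n, rfl⟩)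
  exact ⟨m, hm⟩

/-- Bounded Lipschitz functions are integrable. -/
lemma aux_integrable {H : Type*} [NormedAddCommGroup H] [MeasurableSpace H] [BorelSpace H]
    (m : Measure H) [IsProbabilityMeasure m] (g : H → ℝ) (hg : Continuous g) (C : ℝ)
    (hb : ∀ x, |g x| ≤ C) : Integrable g m :=
  Integrable.of_bound hg.measurable.aestronglyMeasurable C (Eventually.of_forall hb)

open Topology in
/-- If BL functions `f n` converge pointwise to `g` along `l`, integrals against a tight
sequence get close. -/
lemma aux_unif {H : Type*} [NormedAddCommGroup H] [MeasurableSpace H] [BorelSpace H]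
    (μ : ℕ → ProbabilityMeasure H)
    (hμ : ∀ ε : ℝ, 0 < ε → ∃ K : Set H, IsCompact K ∧ ∀ n, (μ n : Measure H) Kᶜ ≤ ENNReal.ofReal ε)
    (l : Filter ℕ) (f : ℕ → H → ℝ) (g : H → ℝ)
    (hf : ∀ n, LipschitzWith 1 (f n)) (hfb : ∀ n x, |f n x| ≤ 1)
    (hg : LipschitzWith 1 g) (hgb : ∀ x, |g x| ≤ 1)
    (hlim : ∀ x, Tendsto (fun n => f n x) l (𝓝 (g x))) :
    Tendsto (fun n => (∫ x, f n x ∂(μ n : Measure H)) - ∫ x, g x ∂(μ n : Measure H)) l (𝓝 0) := by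
  rw [Metric.tendsto_nhds]
  intro ε hε
  obtain ⟨K, hK, hKμ⟩ := hμ (ε / 8) (by positivity)
  obtain ⟨t, -, htf, ht⟩ := hK.finite_cover_balls (e := ε / 8) (by positivity)
  have hev : ∀ᶠ n in l, ∀ y ∈ t, dist (f n y) (g y) < ε / 8 := by
    rw [Filter.eventually_all_finite htf]
    intro y _
    exact Metric.tendsto_nhds.1 (hlim y) _ (by positivity)
  filter_upwards [hev] with n hn
  have hKm : MeasurableSet K := hK.isClosed.measurableSet
  have hpt : ∀ x, |f n x - g x| ≤ 3 * ε / 8 + Kᶜ.indicator (fun _ => (2 : ℝ)) x := by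
    intro x
    by_cases hx : x ∈ K
    · have := ht hx
      simp only [Set.mem_iUnion, Metric.mem_ball] at this
      obtain ⟨y, hy, hxy⟩ := this
      have h1 := hn y hy
      have h2 := (hf n).dist_le_mul x y
      have h3 := hg.dist_le_mul x y
      simp only [NNReal.coe_one, one_mul, Real.dist_eq] at h1 h2 h3
      simp only [Set.indicator, Set.mem_compl_iff, hx, not_true_eq_false, if_false]
      rw [abs_le] at *
      rw [abs_lt] at h1
      constructor <;> linarith [h1.1, h1.2, h2.1, h2.2, h3.1, h3.2]
    · simp only [Set.indicator, Set.mem_compl_iff, hx, not_false_eq_true, if_true]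
      have h1 := abs_le.1 (hfb n x)
      have h2 := abs_le.1 (hgb x)
      rw [abs_le]
      constructor <;> linarith [h1.1, h1.2, h2.1, h2.2]
  have hi1 := aux_integrable (μ n : Measure H) (f n) (hf n).continuous 1 (hfb n)
  have hi2 := aux_integrable (μ n : Measure H) g hg.continuous 1 hgb
  have hi3 : Integrable (Kᶜ.indicator (fun _ => (2 : ℝ))) (μ n : Measure H) :=
    (integrable_const _).indicator hKm.compl
  have hreal : (μ n : Measure H).real Kᶜ ≤ ε / 8 :=
    ENNReal.toReal_le_of_le_ofReal (by positivity) (hKμ n)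
  rw [dist_zero_right, ← integral_sub hi1 hi2]
  calc ‖∫ x, (f n x - g x) ∂(μ n : Measure H)‖
      ≤ ∫ x, ‖f n x - g x‖ ∂(μ n : Measure H) := norm_integral_le_integral_norm _
    _ ≤ ∫ x, (3 * ε / 8 + Kᶜ.indicator (fun _ => (2 : ℝ)) x) ∂(μ n : Measure H) :=
        integral_mono (hi1.sub hi2).norm ((integrable_const _).add hi3) hpt
    _ = 3 * ε / 8 + (μ n : Measure H).real Kᶜ * 2 := by
        rw [integral_add (integrable_const _) hi3, integral_indicator_const _ hKm.compl]
        simp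
    _ < ε := by linarith

open Topology in
lemma aux_key {H : Type*} [NormedAddCommGroup H] [InnerProductSpace ℝ H] [CompleteSpace H]
    [TopologicalSpace.SeparableSpace H] [MeasurableSpace H] [BorelSpace H]
    (μ ν : ℕ → ProbabilityMeasure H)
    (hμ : ∀ ε : ℝ, 0 < ε → ∃ K : Set H, IsCompact K ∧ ∀ n, (μ n : Measure H) Kᶜ ≤ ENNReal.ofReal ε)
    (hν : ∀ ε : ℝ, 0 < ε → ∃ K : Set H, IsCompact K ∧ ∀ n, (ν n : Measure H) Kᶜ ≤ ENNReal.ofReal ε)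
    (hφ : ∀ φ : ℝ → ℝ, LipschitzWith 1 φ → (∀ x, |φ x| ≤ 1) → ∀ h : H,
      Tendsto (fun n => (∫ x, φ ⟪x, h⟫ ∂(μ n : Measure H)) - ∫ x, φ ⟪x, h⟫ ∂(ν n : Measure H))
        atTop (𝓝 0))
    (f : ℕ → H → ℝ)
    (hf : ∀ n, LipschitzWith 1 (f n)) (hfb : ∀ n x, |f n x| ≤ 1) :
    Tendsto (fun n => (∫ x, f n x ∂(μ n : Measure H)) - ∫ x, f n x ∂(ν n : Measure H))
      atTop (𝓝 0) := by
  have : SecondCountableTopology H := UniformSpace.secondCountable_of_separable H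
  rw [Filter.tendsto_iff_ultrafilter]
  intro U hU
  obtain ⟨m, hm⟩ := aux_exists_lim μ hμ U
  obtain ⟨m', hm'⟩ := aux_exists_lim ν hν U
  have hint : ∀ g : H → ℝ, Continuous g → (∀ x, |g x| ≤ 1) →
      Tendsto (fun n => (∫ x, g x ∂(μ n : Measure H)) - ∫ x, g x ∂(ν n : Measure H)) U
        (𝓝 ((∫ x, g x ∂(m : Measure H)) - ∫ x, g x ∂(m' : Measure H))) := by
    intro g hg hgb
    let G : BoundedContinuousFunction H ℝ := BoundedContinuousFunction.ofNormedAddCommGroup g hg 1 hgb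
    exact (ProbabilityMeasure.tendsto_iff_forall_integral_tendsto.1 hm G).sub
      (ProbabilityMeasure.tendsto_iff_forall_integral_tendsto.1 hm' G)
  have heqφ : ∀ φ : ℝ → ℝ, LipschitzWith 1 φ → (∀ x, |φ x| ≤ 1) → ∀ h : H,
      ∫ x, φ ⟪x, h⟫ ∂(m : Measure H) = ∫ x, φ ⟪x, h⟫ ∂(m' : Measure H) := by
    intro φ h1 h2 h
    have hc : Continuous fun x : H => φ ⟪x, h⟫ := h1.continuous.comp (by fun_prop)
    exact sub_eq_zero.1 (tendsto_nhds_unique (hint _ hc fun x => h2 _) ((hφ φ h1 h2 h).mono_left hU))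
  have hchar : ∀ (p : ProbabilityMeasure H) (t : H), charFun (p : Measure H) t =
      ((∫ x, Real.cos ⟪x, t⟫ ∂(p : Measure H) : ℝ) : ℂ)
        + ((∫ x, Real.sin ⟪x, t⟫ ∂(p : Measure H) : ℝ) : ℂ) * Complex.I := by
    intro p t
    have i1 := aux_integrable (p : Measure H) (fun x => Real.cos ⟪x, t⟫) (by fun_prop) 1
      (fun x => Real.abs_cos_le_one _)
    have i2 := aux_integrable (p : Measure H) (fun x => Real.sin ⟪x, t⟫) (by fun_prop) 1
      (fun x => Real.abs_sin_le_one _)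
    rw [charFun_apply, ← integral_complex_ofReal, ← integral_complex_ofReal, ← integral_mul_const,
      ← integral_add i1.ofReal (i2.ofReal.mul_const _)]
    refine integral_congr_ae (Eventually.of_forall fun x => ?_)
    simp [Complex.exp_mul_I]
  have hmm : (m : Measure H) = m' := by
    apply Measure.ext_of_charFun
    ext t
    rw [hchar, hchar, heqφ Real.cos Real.lipschitzWith_cos Real.abs_cos_le_one,
      heqφ Real.sin Real.lipschitzWith_sin Real.abs_sin_le_one]
  have hg : ∀ x, ∃ y ∈ Set.Icc (-1 : ℝ) 1, Tendsto (fun n => f n x) U (𝓝 y) := by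
    intro x
    obtain ⟨y, hy, h⟩ := (isCompact_Icc (a := (-1 : ℝ)) (b := 1)).ultrafilter_le_nhds
      (U.map fun n => f n x) (by
        simp only [Filter.le_principal_iff, Ultrafilter.mem_coe, Ultrafilter.mem_map]
        exact Filter.univ_mem' fun n => abs_le.1 (hfb n x))
    exact ⟨y, hy, h⟩
  choose g hgI hglim using hg
  have hgb : ∀ x, |g x| ≤ 1 := fun x => abs_le.2 (hgI x)
  have hgL : LipschitzWith 1 g := by
    refine LipschitzWith.of_dist_le_mul fun x y => ?_
    exact le_of_tendsto ((hglim x).dist (hglim y)) (Eventually.of_forall fun n => (hf n).dist_le_mul x y)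
  have a1 := aux_unif μ hμ U f g hf hfb hgL hgb hglim
  have a2 := aux_unif ν hν U f g hf hfb hgL hgb hglim
  have a3 := hint g hgL.continuous hgb
  rw [hmm, sub_self] at a3
  have := (a1.sub a2).add a3
  simp only [sub_self, add_zero] at this
  refine this.congr fun n => ?_
  ring

lemma aux_le_two {Ω B : Type*} [MeasurableSpace Ω] [PseudoMetricSpace B]
    (μ : Measure Ω) [IsProbabilityMeasure μ] (U V : Ω → B) (f : B → ℝ) (hf : ∀ x, |f x| ≤ 1) :
    |(∫ ω, f (U ω) ∂μ) - ∫ ω, f (V ω) ∂μ| ≤ 2 := by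
  have h : ∀ W : Ω → B, |∫ ω, f (W ω) ∂μ| ≤ 1 := by
    intro W
    have := norm_integral_le_of_norm_le_const (μ := μ) (f := fun ω => f (W ω)) (C := 1)
      (Eventually.of_forall fun ω => hf _)
    simpa using this
  have h1 := abs_le.1 (h U)
  have h2 := abs_le.1 (h V)
  rw [abs_le]
  constructor <;> linarith [h1.1, h1.2, h2.1, h2.2]

lemma aux_le_dBL {Ω B : Type*} [MeasurableSpace Ω] [PseudoMetricSpace B]
    (μ : Measure Ω) [IsProbabilityMeasure μ] (U V : Ω → B) (f : B → ℝ)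
    (hL : LipschitzWith 1 f) (hf : ∀ x, |f x| ≤ 1) :
    |(∫ ω, f (U ω) ∂μ) - ∫ ω, f (V ω) ∂μ| ≤ dBL μ U V :=
  le_ciSup (f := fun f : {g : B → ℝ // LipschitzWith 1 g ∧ ∀ x, |g x| ≤ 1} =>
    |(∫ ω, f.1 (U ω) ∂μ) - ∫ ω, f.1 (V ω) ∂μ|)
    ⟨2, by rintro _ ⟨g, rfl⟩; exact aux_le_two μ U V g.1 g.2.2⟩ ⟨f, hL, hf⟩

instance aux_nonempty {B : Type*} [PseudoMetricSpace B] :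
    Nonempty {g : B → ℝ // LipschitzWith 1 g ∧ ∀ x, |g x| ≤ 1} :=
  ⟨⟨fun _ => 0, LipschitzWith.const' 0, by simp⟩⟩

lemma aux_dBL_le_two {Ω B : Type*} [MeasurableSpace Ω] [PseudoMetricSpace B]
    (μ : Measure Ω) [IsProbabilityMeasure μ] (U V : Ω → B) : dBL μ U V ≤ 2 :=
  ciSup_le fun g => aux_le_two μ U V g.1 g.2.2

lemma aux_dBL_nonneg {Ω B : Type*} [MeasurableSpace Ω] [PseudoMetricSpace B]
    (μ : Measure Ω) (U V : Ω → B) : 0 ≤ dBL μ U V :=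
  Real.iSup_nonneg fun _ => abs_nonneg _

/-- Sufficient conditions for uniform convergence in distribution of Hilbertian random
variables: uniform distributional convergence of all one-dimensional projections, sequential
tightness of the approximating family and uniform tightness of the limit family. -/
theorem tendstoUnifInDist_of_proj
    {Ω Θ H : Type*} [MeasurableSpace Ω]
    [NormedAddCommGroup H] [InnerProductSpace ℝ H] [CompleteSpace H]
    [TopologicalSpace.SeparableSpace H] [MeasurableSpace H] [BorelSpace H]
    (P : Θ → Measure Ω) (hP : ∀ θ, IsProbabilityMeasure (P θ))
    (X : ℕ → Θ → Ω → H) (Xlim : Θ → Ω → H)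
    (hXmeas : ∀ n θ, Measurable (X n θ)) (hXlimmeas : ∀ θ, Measurable (Xlim θ))
    (hproj : ∀ h : H, TendstoUnifInDist P
      (fun n θ ω => ⟪X n θ ω, h⟫) (fun θ ω => ⟪Xlim θ ω, h⟫))
    (hseq : SeqTight P X)
    (htight : UniformlyTight P Xlim) :
    TendstoUnifInDist P X Xlim := by
  rcases isEmpty_or_nonempty Θ with hΘ | hΘ
  · simp [TendstoUnifInDist, Real.iSup_of_isEmpty]
  have hbddR : ∀ (Y : Θ → Ω → ℝ) (Z : Θ → Ω → ℝ),
      BddAbove (Set.range fun θ => dBL (P θ) (Y θ) (Z θ)) := by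
    intro Y Z
    refine ⟨2, ?_⟩
    rintro _ ⟨θ, rfl⟩
    exact aux_dBL_le_two _ _ _
  have hsel : ∀ n : ℕ, ∃ θ : Θ, ∃ f : H → ℝ, (LipschitzWith 1 f ∧ ∀ x, |f x| ≤ 1) ∧
      (⨆ θ, dBL (P θ) (X n θ) (Xlim θ)) ≤
        |(∫ ω, f (X n θ ω) ∂P θ) - ∫ ω, f (Xlim θ ω) ∂P θ| + 2 * (1 / ((n : ℝ) + 1)) := by
    intro n
    have hp : (0 : ℝ) < 1 / ((n : ℝ) + 1) := by positivity
    obtain ⟨θ, hθ⟩ := exists_lt_of_lt_ciSup (sub_lt_self (⨆ θ, dBL (P θ) (X n θ) (Xlim θ)) hp)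
    obtain ⟨f, hf⟩ := exists_lt_of_lt_ciSup (sub_lt_self (dBL (P θ) (X n θ) (Xlim θ)) hp)
    exact ⟨θ, f.1, f.2, by linarith⟩
  choose θs f hf hle using hsel
  let μ : ℕ → ProbabilityMeasure H := fun n =>
    ⟨(P (θs n)).map (X n (θs n)), Measure.isProbabilityMeasure_map (hXmeas _ _).aemeasurable⟩
  let ν : ℕ → ProbabilityMeasure H := fun n =>
    ⟨(P (θs n)).map (Xlim (θs n)), Measure.isProbabilityMeasure_map (hXlimmeas _).aemeasurable⟩
  have iμ : ∀ n (g : H → ℝ), Continuous g →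
      ∫ x, g x ∂(μ n : Measure H) = ∫ ω, g (X n (θs n) ω) ∂P (θs n) := fun n g hg =>
    integral_map (hXmeas _ _).aemeasurable hg.measurable.aestronglyMeasurable
  have iν : ∀ n (g : H → ℝ), Continuous g →
      ∫ x, g x ∂(ν n : Measure H) = ∫ ω, g (Xlim (θs n) ω) ∂P (θs n) := fun n g hg =>
    integral_map (hXlimmeas _).aemeasurable hg.measurable.aestronglyMeasurable
  have key := aux_key μ ν ?_ ?_ ?_ f (fun n => (hf n).1) (fun n => (hf n).2)
  · have h1 : Tendsto (fun n : ℕ => 2 * (1 / ((n : ℝ) + 1))) atTop (nhds 0) := by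
      simpa using (tendsto_one_div_add_atTop_nhds_zero_nat (𝕜 := ℝ)).const_mul 2
    have h2 := key.abs.add h1
    simp only [abs_zero, add_zero] at h2
    refine squeeze_zero (fun n => Real.iSup_nonneg fun θ => aux_dBL_nonneg _ _ _) (fun n => ?_) h2
    rw [iμ n _ (hf n).1.continuous, iν n _ (hf n).1.continuous]
    exact hle n
  · intro ε hε
    obtain ⟨K, hK, h⟩ := hseq θs ε hε
    refine ⟨K, hK, fun n => ?_⟩
    have : (μ n : Measure H) Kᶜ = P (θs n) (X n (θs n) ⁻¹' Kᶜ) :=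
      Measure.map_apply (hXmeas _ _) hK.isClosed.measurableSet.compl
    rw [this]
    exact (h n).le
  · intro ε hε
    obtain ⟨K, hK, h⟩ := htight ε hε
    refine ⟨K, hK, fun n => ?_⟩
    have : (ν n : Measure H) Kᶜ = P (θs n) (Xlim (θs n) ⁻¹' Kᶜ) :=
      Measure.map_apply (hXlimmeas _) hK.isClosed.measurableSet.compl
    rw [this]
    exact (le_iSup (fun θ => P θ {ω | Xlim θ ω ∉ K}) (θs n)).trans h.le
  · intro φ h1 h2 h
    have hc : Continuous fun x : H => φ ⟪x, h⟫ := h1.continuous.comp (by fun_prop)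
    refine squeeze_zero_norm (fun n => ?_) (hproj h)
    rw [iμ n _ hc, iν n _ hc]
    exact (aux_le_dBL (P (θs n)) (fun ω => ⟪X n (θs n) ω, h⟫) (fun ω => ⟪Xlim (θs n) ω, h⟫)
      φ h1 h2).trans (le_ciSup (hbddR (fun θ ω => ⟪X n θ ω, h⟫) (fun θ ω => ⟪Xlim θ ω, h⟫)) (θs n))
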